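/- arXiv:2304.12295 — 2 statements merged into one kernel-verified Lean document; each statement's English description precedes it below -/
import Mathlib

section
/- The resultant with respect to c of the polynomials g₁ = 2c⁶ + (−16s₂² + 4s₄)c⁵ + 20c⁴s₂ − 10c³ − 10c²s₄ + (16s₂²s₄ − 4s₄² + 4s₂)c − 4s₂s₄ − 1 and g₂ = 2c⁴ − 8s₂c² + 4c + 2s₄ equals h³ up to a nonzero constant factor, where h = 256s₂⁴s₄ − 128s₂²s₄² + 64s₂³ + 16s₄³ − 144s₂s₄ − 27. In particular, if h ≠ 0 then g₁ and g₂ have no common root in c over ℂ. -/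
open Polynomial

/-- The Sylvester matrix of `f` (in degree `m`) and `g` (in degree `n`): its determinant
is the resultant `Res(f, g)`. Rows `0,…,n−1` are shifts of the coefficients of `f`,
rows `n,…,n+m−1` are shifts of the coefficients of `g`. -/
noncomputable def sylvester (m n : ℕ) (f g : Polynomial ℂ) :
    Matrix (Fin (m + n)) (Fin (m + n)) ℂ := fun i j =>
  if (i : ℕ) < n then
    (if (i : ℕ) ≤ (j : ℕ) ∧ (j : ℕ) ≤ m + (i : ℕ) then f.coeff (m + (i : ℕ) - (j : ℕ)) else 0)
  else
    (if (i : ℕ) - n ≤ (j : ℕ) ∧ (j : ℕ) ≤ n + ((i : ℕ) - n) then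
      g.coeff (n + ((i : ℕ) - n) - (j : ℕ)) else 0)

/-- `g₁ = 2c⁶ + (−16s₂²+4s₄)c⁵ + 20s₂c⁴ − 10c³ − 10s₄c² + (16s₂²s₄ − 4s₄² + 4s₂)c − 4s₂s₄ − 1`. -/
noncomputable def G₁ (s₂ s₄ : ℂ) : Polynomial ℂ :=
  C 2 * X ^ 6 + C (-16 * s₂ ^ 2 + 4 * s₄) * X ^ 5 + C (20 * s₂) * X ^ 4
    - C 10 * X ^ 3 - C (10 * s₄) * X ^ 2 + C (16 * s₂ ^ 2 * s₄ - 4 * s₄ ^ 2 + 4 * s₂) * X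
    + C (-4 * s₂ * s₄ - 1)

/-- `g₂ = 2c⁴ − 8s₂c² + 4c + 2s₄`. -/
noncomputable def G₂ (s₂ s₄ : ℂ) : Polynomial ℂ :=
  C 2 * X ^ 4 - C (8 * s₂) * X ^ 2 + C 4 * X + C (2 * s₄)

/-- `h = 256s₂⁴s₄ − 128s₂²s₄² + 64s₂³ + 16s₄³ − 144s₂s₄ − 27`. -/
def hDisc (s₂ s₄ : ℂ) : ℂ :=
  256 * s₂ ^ 4 * s₄ - 128 * s₂ ^ 2 * s₄ ^ 2 + 64 * s₂ ^ 3 + 16 * s₄ ^ 3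
    - 144 * s₂ * s₄ - 27


/-- The Sylvester matrix written out. -/
def sylE (a b : ℂ) : Matrix (Fin 10) (Fin 10) ℂ :=
  !![2, 4*b - 16*a^2, 20*a, -10, -10*b, -4*b^2 + 4*a + 16*a^2*b, -1 - 4*a*b, 0, 0, 0;
    0, 2, 4*b - 16*a^2, 20*a, -10, -10*b, -4*b^2 + 4*a + 16*a^2*b, -1 - 4*a*b, 0, 0;
    0, 0, 2, 4*b - 16*a^2, 20*a, -10, -10*b, -4*b^2 + 4*a + 16*a^2*b, -1 - 4*a*b, 0;
    0, 0, 0, 2, 4*b - 16*a^2, 20*a, -10, -10*b, -4*b^2 + 4*a + 16*a^2*b, -1 - 4*a*b;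
    2, 0, -8*a, 4, 2*b, 0, 0, 0, 0, 0;
    0, 2, 0, -8*a, 4, 2*b, 0, 0, 0, 0;
    0, 0, 2, 0, -8*a, 4, 2*b, 0, 0, 0;
    0, 0, 0, 2, 0, -8*a, 4, 2*b, 0, 0;
    0, 0, 0, 0, 2, 0, -8*a, 4, 2*b, 0;
    0, 0, 0, 0, 0, 2, 0, -8*a, 4, 2*b]

/-- Row operations reducing the shifts of `g₁` modulo `g₂`. -/
def opE (a b : ℂ) : Matrix (Fin 10) (Fin 10) ℂ :=
  !![1, 0, 0, 0, -1, -2*b + 8*a^2, -14*a, 7 - 8*a*b + 32*a^3, 10*b - 72*a^2, 4*b^2 + 54*a - 48*a^2*b + 128*a^4;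
    0, 1, 0, 0, 0, -1, -2*b + 8*a^2, -14*a, 7 - 8*a*b + 32*a^3, 10*b - 72*a^2;
    0, 0, 1, 0, 0, 0, -1, -2*b + 8*a^2, -14*a, 7 - 8*a*b + 32*a^3;
    0, 0, 0, 1, 0, 0, 0, -1, -2*b + 8*a^2, -14*a;
    0, 0, 0, 0, 1, 0, 0, 0, 0, 0;
    0, 0, 0, 0, 0, 1, 0, 0, 0, 0;
    0, 0, 0, 0, 0, 0, 1, 0, 0, 0;
    0, 0, 0, 0, 0, 0, 0, 1, 0, 0;
    0, 0, 0, 0, 0, 0, 0, 0, 1, 0;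
    0, 0, 0, 0, 0, 0, 0, 0, 0, 1]

/-- The reduced matrix. -/
def redE (a b : ℂ) : Matrix (Fin 10) (Fin 10) ℂ :=
  !![0, 0, 0, 0, 0, 0, 27 - 144*a*b + 704*a^3, 54*b - 48*a*b^2 - 720*a^2 + 448*a^3*b - 1024*a^5, 36*b^2 + 216*a - 336*a^2*b + 512*a^4, 8*b^3 + 108*a*b - 96*a^2*b^2 + 256*a^4*b;
    0, 0, 0, 0, 0, 0, -8*b^2 - 108*a + 96*a^2*b - 256*a^4, 27 - 144*a*b + 704*a^3, 54*b - 16*a*b^2 - 288*a^2 + 64*a^3*b, 20*b^2 - 144*a^2*b;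
    0, 0, 0, 0, 0, 0, -20*b + 144*a^2, -8*b^2 - 108*a + 96*a^2*b - 256*a^4, 27 - 64*a*b + 128*a^3, 14*b - 16*a*b^2 + 64*a^3*b;
    0, 0, 0, 0, 0, 0, -14 + 16*a*b - 64*a^3, -20*b + 144*a^2, -8*b^2 - 52*a + 32*a^2*b, -1 - 32*a*b;
    2, 0, -8*a, 4, 2*b, 0, 0, 0, 0, 0;
    0, 2, 0, -8*a, 4, 2*b, 0, 0, 0, 0;
    0, 0, 2, 0, -8*a, 4, 2*b, 0, 0, 0;
    0, 0, 0, 2, 0, -8*a, 4, 2*b, 0, 0;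
    0, 0, 0, 0, 2, 0, -8*a, 4, 2*b, 0;
    0, 0, 0, 0, 0, 2, 0, -8*a, 4, 2*b]

/-- Remainders of `c^k g₁` modulo `g₂`. -/
def remE (a b : ℂ) : Matrix (Fin 4) (Fin 4) ℂ :=
  !![27 - 144*a*b + 704*a^3, 54*b - 48*a*b^2 - 720*a^2 + 448*a^3*b - 1024*a^5, 36*b^2 + 216*a - 336*a^2*b + 512*a^4, 8*b^3 + 108*a*b - 96*a^2*b^2 + 256*a^4*b;
    -8*b^2 - 108*a + 96*a^2*b - 256*a^4, 27 - 144*a*b + 704*a^3, 54*b - 16*a*b^2 - 288*a^2 + 64*a^3*b, 20*b^2 - 144*a^2*b;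
    -20*b + 144*a^2, -8*b^2 - 108*a + 96*a^2*b - 256*a^4, 27 - 64*a*b + 128*a^3, 14*b - 16*a*b^2 + 64*a^3*b;
    -14 + 16*a*b - 64*a^3, -20*b + 144*a^2, -8*b^2 - 52*a + 32*a^2*b, -1 - 32*a*b]

theorem G₁_coeffs (a b : ℂ) : (G₁ a b).coeff 0 = -4 * a * b - 1 ∧
    (G₁ a b).coeff 1 = 16 * a ^ 2 * b - 4 * b ^ 2 + 4 * a ∧ (G₁ a b).coeff 2 = -10 * b ∧
    (G₁ a b).coeff 3 = -10 ∧ (G₁ a b).coeff 4 = 20 * a ∧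
    (G₁ a b).coeff 5 = -16 * a ^ 2 + 4 * b ∧ (G₁ a b).coeff 6 = 2 := by
  refine ⟨?_, ?_, ?_, ?_, ?_, ?_, ?_⟩ <;>
    simp only [G₁, coeff_add, coeff_sub, coeff_C_mul, coeff_X_pow, coeff_X, coeff_C] <;> norm_num

theorem G₂_coeffs (a b : ℂ) : (G₂ a b).coeff 0 = 2 * b ∧
    (G₂ a b).coeff 1 = 4 ∧ (G₂ a b).coeff 2 = -8 * a ∧
    (G₂ a b).coeff 3 = 0 ∧ (G₂ a b).coeff 4 = 2 := by
  refine ⟨?_, ?_, ?_, ?_, ?_⟩ <;>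
    simp only [G₂, coeff_add, coeff_sub, coeff_C_mul, coeff_X_pow, coeff_X, coeff_C] <;> norm_num

set_option maxHeartbeats 4000000 in
theorem syl_eq (a b : ℂ) : sylvester 6 4 (G₁ a b) (G₂ a b) = sylE a b := by
  obtain ⟨h0, h1, h2, h3, h4, h5, h6⟩ := G₁_coeffs a b
  obtain ⟨k0, k1, k2, k3, k4⟩ := G₂_coeffs a b
  ext i j
  fin_cases i <;> fin_cases j <;>
    simp [_root_.sylvester, sylE, h0, h1, h2, h3, h4, h5, h6, k0, k1, k2, k3, k4] <;> ring

set_option maxHeartbeats 4000000 in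
theorem op_mul (a b : ℂ) : opE a b * sylE a b = redE a b := by
  ext i j
  rw [Matrix.mul_apply]
  fin_cases i <;> fin_cases j <;>
    simp [Fin.sum_univ_succ, opE, sylE, redE] <;> ring

set_option maxHeartbeats 4000000 in
theorem op_det (a b : ℂ) : (opE a b).det = 1 := by
  rw [Matrix.det_of_upperTriangular]
  · simp [Fin.prod_univ_succ, opE]
  · intro i j hij
    fin_cases i <;> fin_cases j <;> first | rfl | (exfalso; revert hij; decide)

theorem det_col {n : ℕ} (M : Matrix (Fin (n + 1)) (Fin (n + 1)) ℂ) (k : Fin (n + 1))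
    (h : ∀ i, i ≠ k → M i 0 = 0) :
    M.det = (-1) ^ (k : ℕ) * M k 0 * (M.submatrix k.succAbove Fin.succ).det := by
  rw [Matrix.det_succ_column_zero]
  refine Finset.sum_eq_single k (fun i _ hi => ?_) (fun hk => absurd (Finset.mem_univ k) hk)
  rw [h i hi, mul_zero, zero_mul]

set_option maxHeartbeats 4000000 in
theorem red_det (a b : ℂ) : (redE a b).det = 64 * (remE a b).det := by
  rw [det_col _ 4 (by intro i hi; fin_cases i <;> first | rfl | exact absurd rfl hi),
    det_col _ 4 (by intro i hi; fin_cases i <;> first | rfl | exact absurd rfl hi),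
    det_col _ 4 (by intro i hi; fin_cases i <;> first | rfl | exact absurd rfl hi),
    det_col _ 4 (by intro i hi; fin_cases i <;> first | rfl | exact absurd rfl hi),
    det_col _ 4 (by intro i hi; fin_cases i <;> first | rfl | exact absurd rfl hi),
    det_col _ 4 (by intro i hi; fin_cases i <;> first | rfl | exact absurd rfl hi)]
  have e : ∀ M : Matrix (Fin 4) (Fin 4) ℂ, M = remE a b →
      (-1 : ℂ) ^ 4 * 2 * ((-1 : ℂ) ^ 4 * 2 * ((-1 : ℂ) ^ 4 * 2 * ((-1 : ℂ) ^ 4 * 2 *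
      ((-1 : ℂ) ^ 4 * 2 * ((-1 : ℂ) ^ 4 * 2 * M.det))))) = 64 * (remE a b).det := by
    rintro M rfl
    ring
  refine e _ ?_
  ext i j
  fin_cases i <;> fin_cases j <;> rfl

set_option maxHeartbeats 4000000 in
theorem rem_det (a b : ℂ) : (remE a b).det = hDisc a b ^ 3 := by
  simp [remE, hDisc, Matrix.det_succ_row_zero, Fin.sum_univ_succ, Fin.succAbove]
  ring

theorem syl_det (a b : ℂ) : (sylvester 6 4 (G₁ a b) (G₂ a b)).det = 64 * hDisc a b ^ 3 := by
  rw [← rem_det, ← red_det, ← op_mul, Matrix.det_mul, op_det, one_mul, ← syl_eq]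

set_option maxHeartbeats 4000000 in
theorem syl_mulVec (a b c : ℂ) (h1 : (G₁ a b).eval c = 0) (h2 : (G₂ a b).eval c = 0) :
    (sylE a b).mulVec (fun j => c ^ (9 - (j : ℕ))) = 0 := by
  simp only [G₁, G₂, eval_add, eval_sub, eval_mul, eval_C, eval_pow, eval_X] at h1 h2
  ext i
  rw [Matrix.mulVec, dotProduct]
  fin_cases i <;> simp [Fin.sum_univ_succ, sylE]
  · linear_combination c ^ 3 * h1
  · linear_combination c ^ 2 * h1
  · linear_combination c ^ 1 * h1
  · linear_combination c ^ 0 * h1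
  · linear_combination c ^ 5 * h2
  · linear_combination c ^ 4 * h2
  · linear_combination c ^ 3 * h2
  · linear_combination c ^ 2 * h2
  · linear_combination c ^ 1 * h2
  · linear_combination c ^ 0 * h2

/-- The resultant with respect to `c` of `g₁` and `g₂` equals `h³` up to a nonzero
constant factor. In particular, if `h ≠ 0` then `g₁` and `g₂` have no common complex root. -/
theorem resultant_eq_h_cubed :
    (∃ k : ℂ, k ≠ 0 ∧ ∀ s₂ s₄ : ℂ,
        (sylvester 6 4 (G₁ s₂ s₄) (G₂ s₂ s₄)).det = k * hDisc s₂ s₄ ^ 3) ∧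
    (∀ s₂ s₄ : ℂ, hDisc s₂ s₄ ≠ 0 →
        ∀ c : ℂ, ¬((G₁ s₂ s₄).eval c = 0 ∧ (G₂ s₂ s₄).eval c = 0)) := by
  refine ⟨⟨64, by norm_num, syl_det⟩, ?_⟩
  rintro a b hh c ⟨h1, h2⟩
  have hd := syl_det a b
  rw [syl_eq, Matrix.exists_mulVec_eq_zero_iff.mp ⟨_, ?_, syl_mulVec a b c h1 h2⟩] at hd
  · have := pow_ne_zero 3 hh
    simp_all
  · intro h0
    simpa using congrFun h0 9
end

section
/- The resultant with respect to c of the polynomials s₄' = c⁴ − 4c²s₂ + 2c + s₄ and r = s₃' − 2b·s₄' where s₃' = 2bc⁴ − 8bc²s₂ + 2c³ + 4bc + 2bs₄ − 4cs₂ + 1 (so r = 2c³ − 4cs₂ + 1) equals, up to a nonzero constant, h = 256s₂⁴s₄ − 128s₂²s₄² + 64s₂³ + 16s₄³ − 144s₂s₄ − 27. Hence if h = 0 these two polynomials in c have a common complex root. -/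
open Polynomial

/-- `s₄' = c⁴ − 4s₂c² + 2c + s₄` as a polynomial in `c`. -/
noncomputable def S₄' (s₂ s₄ : ℂ) : Polynomial ℂ :=
  X ^ 4 - C (4 * s₂) * X ^ 2 + C 2 * X + C s₄

/-- `r = 2c³ − 4s₂c + 1` as a polynomial in `c`. -/
noncomputable def R (s₂ : ℂ) : Polynomial ℂ :=
  C 2 * X ^ 3 - C (4 * s₂) * X + C 1

set_option maxHeartbeats 4000000 in
theorem det_aux (s t : ℂ) : Matrix.det
    (!![1, 0, -(4 * s), 2, t, 0, 0;
       0, 1, 0, -(4 * s), 2, t, 0;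
       0, 0, 1, 0, -(4 * s), 2, t;
       2, 0, -(4 * s), 1, 0, 0, 0;
       0, 2, 0, -(4 * s), 1, 0, 0;
       0, 0, 2, 0, -(4 * s), 1, 0;
       0, 0, 0, 2, 0, -(4 * s), 1] : Matrix (Fin 7) (Fin 7) ℂ) =
    256 * s ^ 4 * t - 128 * s ^ 2 * t ^ 2 + 64 * s ^ 3 + 16 * t ^ 3
    - 144 * s * t - 27 := by
  simp [Matrix.det_succ_column_zero, Fin.sum_univ_succ, Fin.succAbove]
  ring

/-- `s₃' − 2b·s₄' = 2c³ − 4s₂c + 1` is independent of `b`, and the resultant with respect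
to `c` of `s₄' = c⁴ − 4s₂c² + 2c + s₄` and `2c³ − 4s₂c + 1` equals `h` up to a nonzero
constant; hence if `h = 0` these two polynomials have a common complex root. -/
theorem resultant_eq_h :
    (∀ b c s₂ s₄ : ℂ,
      (2 * b * c ^ 4 - 8 * b * c ^ 2 * s₂ + 2 * c ^ 3 + 4 * b * c + 2 * b * s₄
          - 4 * c * s₂ + 1) - 2 * b * (c ^ 4 - 4 * c ^ 2 * s₂ + 2 * c + s₄)
        = 2 * c ^ 3 - 4 * c * s₂ + 1) ∧
    (∃ k : ℂ, k ≠ 0 ∧ ∀ s₂ s₄ : ℂ,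
        (sylvester 4 3 (S₄' s₂ s₄) (R s₂)).det = k * hDisc s₂ s₄) ∧
    (∀ s₂ s₄ : ℂ, hDisc s₂ s₄ = 0 →
        ∃ c : ℂ, (S₄' s₂ s₄).eval c = 0 ∧ (R s₂).eval c = 0) := by
  refine ⟨fun b c s₂ s₄ => by ring, ⟨1, one_ne_zero, fun s₂ s₄ => ?_⟩, fun s t h => ?_⟩
  · have f0 : (S₄' s₂ s₄).coeff 0 = s₄ := by simp [S₄', coeff_X, coeff_C, coeff_X_pow]
    have f1 : (S₄' s₂ s₄).coeff 1 = 2 := by simp [S₄', -map_mul, coeff_X, coeff_C, coeff_X_pow]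
    have f2 : (S₄' s₂ s₄).coeff 2 = -(4 * s₂) := by
      simp [S₄', coeff_X, coeff_C, coeff_X_pow, -map_mul]
    have f3 : (S₄' s₂ s₄).coeff 3 = 0 := by
      simp [S₄', coeff_X, coeff_C, coeff_X_pow, -map_mul]
    have f4 : (S₄' s₂ s₄).coeff 4 = 1 := by
      simp [S₄', coeff_X, coeff_C, coeff_X_pow, -map_mul]
    have g0 : (R s₂).coeff 0 = 1 := by simp [R, coeff_X, coeff_C, coeff_X_pow]
    have g1 : (R s₂).coeff 1 = -(4 * s₂) := by
      simp [R, coeff_X, coeff_one, coeff_C, coeff_X_pow, -map_mul]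
    have g2 : (R s₂).coeff 2 = 0 := by
      simp [R, coeff_X, coeff_one, coeff_C, coeff_X_pow, -map_mul]
    have g3 : (R s₂).coeff 3 = 2 := by
      simp [R, coeff_X, coeff_one, coeff_C, coeff_X_pow, -map_mul]
    have hM : sylvester 4 3 (S₄' s₂ s₄) (R s₂) =
        !![1, 0, -(4 * s₂), 2, s₄, 0, 0;
           0, 1, 0, -(4 * s₂), 2, s₄, 0;
           0, 0, 1, 0, -(4 * s₂), 2, s₄;
           2, 0, -(4 * s₂), 1, 0, 0, 0;
           0, 2, 0, -(4 * s₂), 1, 0, 0;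
           0, 0, 2, 0, -(4 * s₂), 1, 0;
           0, 0, 0, 2, 0, -(4 * s₂), 1] := by
      ext i j
      fin_cases i <;> fin_cases j <;> simp [_root_.sylvester, f0, f1, f2, f3, f4, g0, g1, g2, g3]
    rw [hM, hDisc]
    rw [det_aux]
    ring
  · have hdeg : (R s).degree ≠ 0 := by
      have : (R s).degree = 3 := by
        unfold R
        compute_degree!
      rw [this]; decide
    obtain ⟨a, ha⟩ := IsAlgClosed.exists_root (R s) hdeg
    have ha' : 2 * a ^ 3 - 4 * s * a + 1 = 0 := by
      simpa [R, IsRoot] using ha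
    obtain ⟨d, hd⟩ := IsAlgClosed.exists_pow_nat_eq (8 * s - 3 * a ^ 2) (n := 2) (by norm_num)
    obtain ⟨b, hb⟩ : ∃ b : ℂ, b = (d - a) / 2 := ⟨_, rfl⟩
    have hs : s = (a ^ 2 + a * b + b ^ 2) / 2 := by
      rw [hb]; linear_combination (-1 / 8) * hd
    have hab : 2 * a * b * (a + b) - 1 = 0 := by
      rw [hs] at ha'
      linear_combination -ha'
    have key : (S₄' s t).eval a * (S₄' s t).eval b * (S₄' s t).eval (-a - b) = 0 := by
      simp only [S₄', eval_add, eval_sub, eval_mul, eval_pow, eval_X, eval_C]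
      rw [hDisc] at h
      rw [hs] at h ⊢
      linear_combination (1 / 16) * h - (1 / 16) * ((16) * a ^ 8 * b ^ 1 * t ^ 0 + (64) * a ^ 7 * b ^ 2 * t ^ 0 + (136) * a ^ 6 * b ^ 3 * t ^ 0 + (-8) * a ^ 6 * b ^ 0 * t ^ 0 + (184) * a ^ 5 * b ^ 4 * t ^ 0 + (-24) * a ^ 5 * b ^ 1 * t ^ 0 + (184) * a ^ 4 * b ^ 5 * t ^ 0 + (-4) * a ^ 4 * b ^ 2 * t ^ 0 + (-16) * a ^ 4 * b ^ 1 * t ^ 1 + (136) * a ^ 3 * b ^ 6 * t ^ 0 + (32) * a ^ 3 * b ^ 3 * t ^ 0 + (-32) * a ^ 3 * b ^ 2 * t ^ 1 + (64) * a ^ 2 * b ^ 7 * t ^ 0 + (-4) * a ^ 2 * b ^ 4 * t ^ 0 + (-32) * a ^ 2 * b ^ 3 * t ^ 1 + (-74) * a ^ 2 * b ^ 1 * t ^ 0 + (8) * a ^ 2 * b ^ 0 * t ^ 1 + (16) * a ^ 1 * b ^ 8 * t ^ 0 + (-24) * a ^ 1 * b ^ 5 * t ^ 0 + (-16) * a ^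 1 * b ^ 4 * t ^ 1 + (-74) * a ^ 1 * b ^ 2 * t ^ 0 + (8) * a ^ 1 * b ^ 1 * t ^ 1 + (-8) * a ^ 0 * b ^ 6 * t ^ 0 + (8) * a ^ 0 * b ^ 2 * t ^ 1 + (27) * a ^ 0 * b ^ 0 * t ^ 0) * hab
    have hR : ∀ x : ℂ, (x = a ∨ x = b ∨ x = -a - b) → (R s).eval x = 0 := by
      intro x hx
      simp only [R, eval_add, eval_sub, eval_mul, eval_pow, eval_X, eval_C]
      rw [hs]
      rcases hx with rfl | rfl | rfl <;> linear_combination -hab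
    rcases mul_eq_zero.1 key with h1 | h1
    · rcases mul_eq_zero.1 h1 with h2 | h2
      · exact ⟨a, h2, hR a (by simp)⟩
      · exact ⟨b, h2, hR b (by simp)⟩
    · exact ⟨-a - b, h1, hR _ (by simp)⟩
end
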